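/- arXiv:2301.08977 — 2 statements merged into one kernel-verified Lean document; each statement's English description precedes it below -/
import Mathlib

section
/- The Rademacher symbol Ψ : SL₂(ℤ) → ℝ, defined by Ψ(γ) = Φ(γ) − 3·sgn(c(a+d)) for γ = ((a,b),(c,d)), is a class function: Ψ(δγδ⁻¹) = Ψ(γ) for all γ, δ ∈ SL₂(ℤ). -/
open Classical in
/-- The sawtooth function `((x))`: `0` if `x ∈ ℤ`, and `x - ⌊x⌋ - 1/2` otherwise. -/
noncomputable def sawtooth (x : ℝ) : ℝ :=
  if ∃ n : ℤ, x = n then 0 else x - ⌊x⌋ - 1 / 2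

/-- The Dedekind sum `s(a, c) = ∑_{k=1}^{|c|} ((a k / c)) ((k / c))`. -/
noncomputable def dedekindSum (a c : ℤ) : ℝ :=
  ∑ k ∈ Finset.Icc (1 : ℤ) |c|, sawtooth ((a * k : ℤ) / (c : ℝ)) * sawtooth ((k : ℤ) / (c : ℝ))

/-- The Dedekind symbol `Φ : SL₂(ℤ) → ℝ`: for `γ = ((a,b),(c,d))` it is `b/d` if `c = 0`,
and `(a+d)/c - 12 sgn(c) s(a,c)` if `c ≠ 0`. -/
noncomputable def dedekindSymbol (g : Matrix.SpecialLinearGroup (Fin 2) ℤ) : ℝ :=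
  if (g : Matrix (Fin 2) (Fin 2) ℤ) 1 0 = 0 then
    ((g : Matrix (Fin 2) (Fin 2) ℤ) 0 1 : ℝ) / ((g : Matrix (Fin 2) (Fin 2) ℤ) 1 1 : ℝ)
  else
    (((g : Matrix (Fin 2) (Fin 2) ℤ) 0 0 + (g : Matrix (Fin 2) (Fin 2) ℤ) 1 1 : ℤ) : ℝ) /
        ((g : Matrix (Fin 2) (Fin 2) ℤ) 1 0 : ℝ) -
      12 * (((g : Matrix (Fin 2) (Fin 2) ℤ) 1 0).sign : ℝ) *
        dedekindSum ((g : Matrix (Fin 2) (Fin 2) ℤ) 0 0) ((g : Matrix (Fin 2) (Fin 2) ℤ) 1 0)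

/-- The Rademacher symbol `Ψ(γ) = Φ(γ) - 3 sgn(c (a + d))`. -/
noncomputable def rademacherSymbol (g : Matrix.SpecialLinearGroup (Fin 2) ℤ) : ℝ :=
  dedekindSymbol g -
    3 * ((((g : Matrix (Fin 2) (Fin 2) ℤ) 1 0) *
          ((g : Matrix (Fin 2) (Fin 2) ℤ) 0 0 + (g : Matrix (Fin 2) (Fin 2) ℤ) 1 1)).sign : ℝ)

open Finset in
lemma sum_periodic_mul (c : ℕ) (hc : 0 < c) (u : ℤ) (hu : IsCoprime u (c : ℤ)) (f : ℤ → ℝ)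
    (hf : ∀ x y : ℤ, (c : ℤ) ∣ x - y → f x = f y) :
    ∑ k ∈ range c, f (u * k) = ∑ k ∈ range c, f k := by
  have : NeZero c := ⟨hc.ne'⟩
  have key : ∀ g : ℤ → ℝ, (∀ x y : ℤ, (c : ℤ) ∣ x - y → g x = g y) →
      ∑ k ∈ range c, g k = ∑ x : ZMod c, g (x.val : ℤ) := by
    intro g _
    refine Finset.sum_bij' (fun k _ => (k : ZMod c)) (fun x _ => x.val) ?_ ?_ ?_ ?_ ?_
    · intros; simp
    · intro x _; simpa using ZMod.val_lt x
    · intro k hk; exact ZMod.val_cast_of_lt (by simpa using hk)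
    · intro x _; simp
    · intro k hk
      rw [ZMod.val_cast_of_lt (by simpa using hk)]
  rw [key f hf, key (fun k => f (u * k))
    (fun x y h => hf _ _ (by rw [← mul_sub]; exact Dvd.dvd.mul_left h u))]
  have hunit : IsUnit ((u : ℤ) : ZMod c) := by
    obtain ⟨p, q, h⟩ := hu
    have h2 : ((p * u + q * c : ℤ) : ZMod c) = 1 := by rw [h]; simp
    push_cast at h2
    simp only [ZMod.natCast_self, mul_zero, add_zero] at h2
    exact IsUnit.of_mul_eq_one _ (by rw [mul_comm]; exact h2)
  obtain ⟨v, hv⟩ := hunit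
  refine Fintype.sum_bijective (fun x => (u : ZMod c) * x) ?_ _ _ ?_
  · rw [← hv]; exact Units.mulLeft_bijective v
  · intro x
    apply hf
    rw [← ZMod.intCast_eq_intCast_iff_dvd_sub]
    simp

lemma saw_div (c : ℤ) (hc : 0 < c) (k : ℤ) :
    sawtooth ((k : ℝ) / (c : ℝ)) = if k % c = 0 then 0 else ((k % c : ℤ) : ℝ) / c - 1 / 2 := by
  have hcR : (c : ℝ) ≠ 0 := by exact_mod_cast hc.ne'
  unfold sawtooth
  have h1 : (∃ n : ℤ, (k : ℝ) / c = n) ↔ k % c = 0 := by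
    constructor
    · rintro ⟨n, hn⟩
      rw [div_eq_iff hcR] at hn
      have : k = n * c := by exact_mod_cast hn
      simp [this]
    · intro h
      obtain ⟨n, rfl⟩ := Int.dvd_of_emod_eq_zero h
      exact ⟨n, by push_cast; field_simp⟩
  have h2 : ⌊(k : ℝ) / c⌋ = k / c := by
    rw [Int.floor_eq_iff]
    have hcp : (0 : ℝ) < c := by exact_mod_cast hc
    have e := Int.mul_ediv_add_emod k c
    have e1 := Int.emod_nonneg k hc.ne'
    have e2 := Int.emod_lt_of_pos k hc
    constructor
    · rw [le_div_iff₀ hcp]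
      exact_mod_cast (by nlinarith : (k / c) * c ≤ k)
    · rw [div_lt_iff₀ hcp]
      exact_mod_cast (by nlinarith : k < (k / c + 1) * c)
  simp only [h1]
  split_ifs
  · rfl
  · rw [h2, Int.emod_def]
    push_cast
    field_simp

lemma saw_neg (x : ℝ) : sawtooth (-x) = - sawtooth x := by
  unfold sawtooth
  have h : (∃ n : ℤ, -x = n) ↔ ∃ n : ℤ, x = n := by
    constructor
    · rintro ⟨n, h⟩; exact ⟨-n, by push_cast; linarith⟩
    · rintro ⟨n, h⟩; exact ⟨-n, by push_cast; linarith⟩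
  by_cases h1 : ∃ n : ℤ, x = n
  · rw [if_pos (h.2 h1), if_pos h1, neg_zero]
  · rw [if_neg (fun h2 => h1 (h.1 h2)), if_neg h1]
    have : ⌊-x⌋ = -⌊x⌋ - 1 := by
      rw [Int.floor_eq_iff]
      have e1 := Int.floor_le x
      have e2 := Int.lt_floor_add_one x
      have e3 : (⌊x⌋ : ℝ) ≠ x := fun h => h1 ⟨_, h.symm⟩
      have e4 := lt_of_le_of_ne e1 e3
      push_cast
      constructor <;> linarith
    rw [this]; push_cast; ring

lemma saw_zero : sawtooth 0 = 0 := by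
  unfold sawtooth
  exact if_pos ⟨0, by simp⟩

lemma saw_periodic (c : ℤ) (hc : 0 < c) (x y : ℤ) (h : c ∣ x - y) :
    sawtooth ((x : ℝ) / (c : ℝ)) = sawtooth ((y : ℝ) / (c : ℝ)) := by
  rw [saw_div c hc, saw_div c hc, Int.emod_eq_emod_iff_emod_sub_eq_zero.2 (Int.emod_eq_zero_of_dvd h)]

/-- Dedekind sum as a sum over `range c`. -/
lemma ds_eq_range (a : ℤ) (c : ℕ) (hc : 0 < c) :
    dedekindSum a c = ∑ k ∈ Finset.range c,
      sawtooth ((a * (k : ℤ) : ℤ) / ((c : ℤ) : ℝ)) * sawtooth (((k : ℤ) : ℝ) / ((c : ℤ) : ℝ)) := by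
  unfold dedekindSum
  set F : ℤ → ℝ := fun k => sawtooth ((a * k : ℤ) / ((c : ℤ) : ℝ)) * sawtooth ((k : ℝ) / ((c : ℤ) : ℝ))
  have h0 : F 0 = 0 := by simp [F, saw_zero]
  have hcc : F c = 0 := by
    have : sawtooth (((c : ℤ) : ℝ) / ((c : ℤ) : ℝ)) = 0 := by
      rw [saw_div c (by exact_mod_cast hc)]; simp
    simp only [F, this, mul_zero]
  have e1 : ∑ k ∈ Finset.Icc (1 : ℤ) |(c : ℤ)|, F k = ∑ k ∈ Finset.Icc 1 c, F (k : ℕ) := by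
    symm
    refine Finset.sum_bij' (fun k _ => (k : ℤ)) (fun k _ => k.toNat) ?_ ?_ ?_ ?_ ?_
    · intro k hk; simp only [Finset.mem_Icc, Nat.abs_cast] at hk ⊢; omega
    · intro k hk; simp only [Finset.mem_Icc, Nat.abs_cast] at hk ⊢; omega
    · intro k hk; simp
    · intro k hk; simp only [Finset.mem_Icc, Nat.abs_cast] at hk ⊢; omega
    · intro k hk; rfl
  have e2 : ∑ k ∈ Finset.range (c + 1), F (k : ℕ) = ∑ k ∈ Finset.range c, F (k : ℕ) := by
    rw [Finset.sum_range_succ, hcc, add_zero]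
  have e3 : ∑ k ∈ Finset.range (c + 1), F (k : ℕ) = ∑ k ∈ Finset.Icc 1 c, F (k : ℕ) := by
    rw [Finset.range_eq_Ico, Finset.sum_eq_sum_Ico_succ_bot (by omega)]
    simp only [Nat.cast_zero, h0, zero_add]
    rfl
  exact e1.trans (e3.symm.trans e2)

lemma ds_neg_right (a c : ℤ) : dedekindSum a (-c) = dedekindSum a c := by
  unfold dedekindSum
  rw [abs_neg]
  refine Finset.sum_congr rfl fun k _ => ?_
  simp only [Int.cast_neg, div_neg, saw_neg]; ring

lemma ds_neg_left (a c : ℤ) : dedekindSum (-a) c = - dedekindSum a c := by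
  unfold dedekindSum
  rw [← Finset.sum_neg_distrib]
  refine Finset.sum_congr rfl fun k _ => ?_
  simp only [neg_mul, Int.cast_neg, neg_div, saw_neg]

lemma ds_natAbs (a c : ℤ) : dedekindSum a c = dedekindSum a (c.natAbs : ℤ) := by
  rcases Int.natAbs_eq c with h | h
  · rw [← h]
  · conv_lhs => rw [h]
    rw [ds_neg_right]

lemma ds_periodic (a a' c : ℤ) (hc : c ≠ 0) (h : c ∣ a - a') :
    dedekindSum a c = dedekindSum a' c := by
  rw [ds_natAbs a, ds_natAbs a']
  have hp : 0 < c.natAbs := Int.natAbs_pos.2 hc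
  rw [ds_eq_range _ _ hp, ds_eq_range _ _ hp]
  refine Finset.sum_congr rfl fun k _ => ?_
  congr 1
  apply saw_periodic _ (by exact_mod_cast hp)
  rw [← sub_mul]
  exact Dvd.dvd.mul_right (Int.natAbs_dvd.2 h) _

lemma ds_inv (a d c : ℤ) (hc : c ≠ 0) (h : c ∣ a * d - 1) :
    dedekindSum d c = dedekindSum a c := by
  rw [ds_natAbs a, ds_natAbs d]
  have hp : 0 < c.natAbs := Int.natAbs_pos.2 hc
  have h : (c.natAbs : ℤ) ∣ a * d - 1 := Int.natAbs_dvd.2 h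
  generalize c.natAbs = n at *
  have hpz : (0 : ℤ) < n := by exact_mod_cast hp
  rw [ds_eq_range _ _ hp, ds_eq_range _ _ hp]
  have hco : IsCoprime a (n : ℤ) := by
    obtain ⟨q, hq⟩ := h
    exact ⟨d, -q, by linarith [mul_comm a d, mul_comm (n : ℤ) q]⟩
  rw [← sum_periodic_mul n hp a hco (fun k => sawtooth ((d * k : ℤ) / ((n : ℤ) : ℝ)) *
    sawtooth ((k : ℝ) / ((n : ℤ) : ℝ)))]
  · refine Finset.sum_congr rfl fun k _ => ?_
    rw [mul_comm]
    congr 1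
    apply saw_periodic _ hpz
    obtain ⟨q, hq⟩ := h
    exact ⟨q * k, by linear_combination (k : ℤ) * hq⟩
  · intro x y hxy
    rw [saw_periodic n hpz x y hxy, saw_periodic n hpz (d * x) (d * y)]
    rw [← mul_sub]; exact Dvd.dvd.mul_left hxy d

lemma sum_id_range (c : ℕ) : ∑ k ∈ Finset.range c, (k : ℝ) = (c : ℝ) * (c - 1) / 2 := by
  induction c with
  | zero => simp
  | succ n ih => rw [Finset.sum_range_succ, ih]; push_cast; ring

lemma sum_sq_range (c : ℕ) :
    ∑ k ∈ Finset.range c, (k : ℝ) ^ 2 = ((c : ℝ) - 1) * c * (2 * c - 1) / 6 := by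
  induction c with
  | zero => simp
  | succ n ih => rw [Finset.sum_range_succ, ih]; push_cast; ring

lemma sum_mod (a c : ℕ) (hc : 0 < c) (h : Nat.Coprime a c) (g : ℕ → ℝ) :
    ∑ k ∈ Finset.range c, g (a * k % c) = ∑ k ∈ Finset.range c, g k := by
  have := sum_periodic_mul c hc a (Nat.isCoprime_iff_coprime.2 h) (fun k => g (k % c).toNat)
    (fun x y hxy => by rw [Int.emod_eq_emod_iff_emod_sub_eq_zero.2 (Int.emod_eq_zero_of_dvd hxy)])
  rw [show ∑ k ∈ Finset.range c, g (a * k % c) =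
    ∑ k ∈ Finset.range c, g (((a : ℤ) * (k : ℤ)) % (c : ℤ)).toNat from
      Finset.sum_congr rfl fun k _ => by norm_cast, this]
  refine Finset.sum_congr rfl fun k hk => ?_
  congr 1
  have : (k : ℤ) % c = ((k % c : ℕ) : ℤ) := by norm_cast
  rw [this, Int.toNat_natCast, Nat.mod_eq_of_lt (by simpa using hk)]

lemma ds_eq_R (a c : ℕ) (hc : 0 < c) (h : Nat.Coprime a c) :
    dedekindSum a c = (∑ k ∈ Finset.range c, (k : ℝ) * (a * k % c : ℕ)) / c ^ 2 - (c - 1) / 4 := by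
  rw [ds_eq_range _ _ hc]
  have hcz : (0 : ℤ) < c := by exact_mod_cast hc
  have hcR : (c : ℝ) ≠ 0 := by exact_mod_cast hc.ne'
  have e : ∀ k ∈ Finset.range c, sawtooth ((a * (k : ℤ) : ℤ) / ((c : ℤ) : ℝ)) *
      sawtooth (((k : ℤ) : ℝ) / ((c : ℤ) : ℝ)) =
      (((a * k % c : ℕ) : ℝ) / c - 1 / 2) * ((k : ℝ) / c - 1 / 2) - if k = 0 then 1 / 4 else 0 := by
    intro k hk
    have hk' : k < c := by simpa using hk
    rw [saw_div _ hcz, saw_div _ hcz]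
    have e1 : ((a : ℤ) * k) % c = ((a * k % c : ℕ) : ℤ) := by norm_cast
    have e2 : (k : ℤ) % c = ((k : ℕ) : ℤ) := by
      rw [← Int.natCast_mod, Nat.mod_eq_of_lt hk']
    rw [e1, e2]
    by_cases h0 : k = 0
    · subst h0; simp; norm_num
    · have e3 : a * k % c ≠ 0 := by
        intro h3
        have := Nat.Coprime.dvd_of_dvd_mul_left h.symm (Nat.dvd_of_mod_eq_zero h3)
        exact absurd (Nat.le_of_dvd (Nat.pos_of_ne_zero h0) this) (by omega)
      rw [if_neg (by exact_mod_cast e3), if_neg (by exact_mod_cast h0), if_neg h0]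
      rw [sub_zero, Int.cast_natCast, Int.cast_natCast, Int.cast_natCast]
  rw [Finset.sum_congr rfl e, Finset.sum_sub_distrib, Finset.sum_ite_eq' (Finset.range c) 0]
  rw [if_pos (by simpa using hc)]
  have e4 := sum_mod a c hc h (fun k => (k : ℝ))
  rw [sum_id_range] at e4
  have e5 := sum_id_range c
  have e6 : ∀ k ∈ Finset.range c, (((a * k % c : ℕ) : ℝ) / c - 1 / 2) * ((k : ℝ) / c - 1 / 2) =
      ((k : ℝ) * (a * k % c : ℕ)) * (1 / c ^ 2) - ((a * k % c : ℕ) : ℝ) * (1 / (2 * c))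
        - (k : ℝ) * (1 / (2 * c)) + 1 / 4 := by
    intro k _; field_simp; ring
  rw [Finset.sum_congr rfl e6, Finset.sum_add_distrib, Finset.sum_sub_distrib,
    Finset.sum_sub_distrib, ← Finset.sum_mul, ← Finset.sum_mul, ← Finset.sum_mul, e4, e5]
  simp only [Finset.sum_const, Finset.card_range, nsmul_eq_mul]
  field_simp
  ring

lemma count_aux (a c : ℕ) (ha : 0 < a) (hc : 0 < c) (h : Nat.Coprime a c) :
    ∑ k ∈ Finset.range c, (((a * k / c : ℕ) : ℝ) * ((a * k / c : ℕ) + 1)) =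
      ∑ j ∈ Finset.range a, 2 * (j : ℝ) * ((c : ℝ) - 1 - (c * j / a : ℕ)) := by
  have e1 : ∀ k ∈ Finset.range c, (((a * k / c : ℕ) : ℝ) * ((a * k / c : ℕ) + 1)) =
      ∑ j ∈ Finset.range a, if c * j ≤ a * k then 2 * (j : ℝ) else 0 := by
    intro k hk
    have hk' : k < c := by simpa using hk
    have hq : a * k / c < a := by
      rw [Nat.div_lt_iff_lt_mul hc]; exact Nat.mul_lt_mul_of_pos_left hk' ha
    rw [← Finset.sum_filter]
    have : (Finset.range a).filter (fun j => c * j ≤ a * k) = Finset.range (a * k / c + 1) := by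
      ext j
      simp only [Finset.mem_filter, Finset.mem_range, Nat.lt_succ_iff, Nat.le_div_iff_mul_le hc]
      rw [mul_comm j c]
      constructor
      · exact fun h => h.2
      · intro h
        refine ⟨?_, h⟩
        have : j ≤ a * k / c := by rw [Nat.le_div_iff_mul_le hc, mul_comm]; exact h
        omega
    rw [this, ← Finset.mul_sum, sum_id_range]
    push_cast; ring
  rw [Finset.sum_congr rfl e1, Finset.sum_comm]
  refine Finset.sum_congr rfl fun j hj => ?_
  have hj' : j < a := by simpa using hj
  rcases Nat.eq_zero_or_pos j with rfl | hj0
  · simp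
  have hq : c * j / a < c := by
    rw [Nat.div_lt_iff_lt_mul ha]; exact Nat.mul_lt_mul_of_pos_left hj' hc
  rw [← Finset.sum_filter]
  have : (Finset.range c).filter (fun k => c * j ≤ a * k) = Finset.Ico (c * j / a + 1) c := by
    ext k
    simp only [Finset.mem_filter, Finset.mem_range, Finset.mem_Ico, Nat.succ_le_iff,
      Nat.div_lt_iff_lt_mul ha]
    rw [mul_comm k a, and_comm]
    refine and_congr_left fun hk => ⟨fun h1 => lt_of_le_of_ne h1 fun h2 => ?_, le_of_lt⟩
    have : a ∣ j := Nat.Coprime.dvd_of_dvd_mul_left h ⟨k, h2⟩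
    exact absurd (Nat.le_of_dvd hj0 this) (by omega)
  rw [this, Finset.sum_const, Nat.card_Ico, nsmul_eq_mul, Nat.cast_sub (by omega)]
  push_cast; ring

lemma reciprocity_nat (a c : ℕ) (ha : 0 < a) (hc : 0 < c) (h : Nat.Coprime a c) :
    12 * (dedekindSum a c + dedekindSum c a) =
      -3 + (a : ℝ) / c + c / a + 1 / (a * c) := by
  rw [ds_eq_R a c hc h, ds_eq_R c a ha h.symm]
  have hcR : (c : ℝ) ≠ 0 := by exact_mod_cast hc.ne'
  have haR : (a : ℝ) ≠ 0 := by exact_mod_cast ha.ne'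
  have hm : ∀ a c k : ℕ, (c : ℝ) * (a * k / c : ℕ) = a * k - (a * k % c : ℕ) := by
    intro a c k
    have := Nat.div_add_mod (a * k) c
    have : ((c * (a * k / c) + a * k % c : ℕ) : ℝ) = (a * k : ℕ) := by rw [this]
    push_cast at this ⊢
    linarith
  have hcount := count_aux a c ha hc h
  set R := ∑ k ∈ Finset.range c, (k : ℝ) * (a * k % c : ℕ) with hR
  set R' := ∑ k ∈ Finset.range a, (k : ℝ) * (c * k % a : ℕ) with hR'
  have s1 := sum_mod a c hc h (fun k => (k : ℝ))
  have s2 := sum_mod a c hc h (fun k => (k : ℝ) ^ 2)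
  simp only [sum_id_range, sum_sq_range] at s1 s2
  have L : (c : ℝ) ^ 2 * ∑ k ∈ Finset.range c, (((a * k / c : ℕ) : ℝ) * ((a * k / c : ℕ) + 1)) =
      (a ^ 2 + 1) * (((c : ℝ) - 1) * c * (2 * c - 1) / 6) - 2 * a * R
        + c * ((a - 1) * ((c : ℝ) * (c - 1) / 2)) := by
    have e : ∀ k ∈ Finset.range c,
        (c : ℝ) ^ 2 * (((a * k / c : ℕ) : ℝ) * ((a * k / c : ℕ) + 1)) =
        (a : ℝ) ^ 2 * (k : ℝ) ^ 2 + ((a * k % c : ℕ) : ℝ) ^ 2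
          - 2 * a * ((k : ℝ) * (a * k % c : ℕ)) + (c * a) * (k : ℝ)
          - c * ((a * k % c : ℕ) : ℝ) := by
      intro k _
      have := hm a c k
      have e : (c : ℝ) ^ 2 * (((a * k / c : ℕ) : ℝ) * ((a * k / c : ℕ) + 1)) =
        ((c : ℝ) * (a * k / c : ℕ)) ^ 2 + c * ((c : ℝ) * (a * k / c : ℕ)) := by ring
      rw [e, this]; ring
    rw [Finset.mul_sum, Finset.sum_congr rfl e]
    simp only [Finset.sum_add_distrib, Finset.sum_sub_distrib, ← Finset.mul_sum]
    rw [s1, s2, sum_id_range, sum_sq_range]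
    ring
  have M : (a : ℝ) * ∑ j ∈ Finset.range a, 2 * (j : ℝ) * ((c : ℝ) - 1 - (c * j / a : ℕ)) =
      2 * a * (c - 1) * ((a : ℝ) * (a - 1) / 2)
        - 2 * (c * (((a : ℝ) - 1) * a * (2 * a - 1) / 6) - R') := by
    have e : ∀ j ∈ Finset.range a,
        (a : ℝ) * (2 * (j : ℝ) * ((c : ℝ) - 1 - (c * j / a : ℕ))) =
        (2 * a * (c - 1)) * (j : ℝ) - (2 * c) * (j : ℝ) ^ 2
          + 2 * ((j : ℝ) * (c * j % a : ℕ)) := by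
      intro j _
      have := hm c a j
      linear_combination (-2 * (j : ℝ)) * this
    rw [Finset.mul_sum, Finset.sum_congr rfl e]
    simp only [Finset.sum_add_distrib, Finset.sum_sub_distrib, ← Finset.mul_sum]
    rw [sum_id_range, sum_sq_range]
    ring
  rw [hcount] at L
  have N : (a : ℝ) * ((a ^ 2 + 1) * (((c : ℝ) - 1) * c * (2 * c - 1) / 6) - 2 * a * R
        + c * ((a - 1) * ((c : ℝ) * (c - 1) / 2))) = c ^ 2 * (2 * a * (c - 1) * ((a : ℝ) * (a - 1) / 2)
        - 2 * (c * (((a : ℝ) - 1) * a * (2 * a - 1) / 6) - R')) := by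
    rw [← L, ← M]; ring
  field_simp
  linear_combination -24 * N

/-- `12 sgn(c) s(a,c)`. -/
noncomputable def dsD (a c : ℤ) : ℝ := 12 * (c.sign : ℝ) * dedekindSum a c

lemma dsD_recip (a c : ℤ) (ha : a ≠ 0) (hc : c ≠ 0) (h : IsCoprime a c) :
    dsD a c + dsD c a = -3 * ((a * c).sign : ℝ) + (a : ℝ) / c + c / a + 1 / (a * c) := by
  have hn : Nat.Coprime a.natAbs c.natAbs := Int.isCoprime_iff_gcd_eq_one.1 h
  have R := reciprocity_nat a.natAbs c.natAbs (Int.natAbs_pos.2 ha) (Int.natAbs_pos.2 hc) hn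
  unfold dsD
  rw [Int.sign_mul]
  rcases lt_or_gt_of_ne ha with ha' | ha' <;> rcases lt_or_gt_of_ne hc with hc' | hc'
  · obtain ⟨m, hm⟩ : ∃ m : ℕ, a = -m := ⟨a.natAbs, by omega⟩
    obtain ⟨n, hn'⟩ : ∃ n : ℕ, c = -n := ⟨c.natAbs, by omega⟩
    rw [Int.sign_eq_neg_one_of_neg ha', Int.sign_eq_neg_one_of_neg hc']
    subst hm
    subst hn'
    simp only [Int.natAbs_neg, Int.natAbs_natCast, ds_neg_left, ds_neg_right] at R ⊢
    push_cast
    simp only [neg_div_neg_eq, neg_mul_neg]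
    linarith
  · obtain ⟨m, hm⟩ : ∃ m : ℕ, a = -m := ⟨a.natAbs, by omega⟩
    obtain ⟨n, hn'⟩ : ∃ n : ℕ, c = n := ⟨c.natAbs, by omega⟩
    rw [Int.sign_eq_neg_one_of_neg ha', Int.sign_eq_one_of_pos hc']
    subst hm
    subst hn'
    simp only [Int.natAbs_neg, Int.natAbs_natCast, ds_neg_left, ds_neg_right] at R ⊢
    push_cast
    simp only [neg_mul, div_neg, neg_div]
    linarith
  · obtain ⟨m, hm⟩ : ∃ m : ℕ, a = m := ⟨a.natAbs, by omega⟩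
    obtain ⟨n, hn'⟩ : ∃ n : ℕ, c = -n := ⟨c.natAbs, by omega⟩
    rw [Int.sign_eq_one_of_pos ha', Int.sign_eq_neg_one_of_neg hc']
    subst hm
    subst hn'
    simp only [Int.natAbs_neg, Int.natAbs_natCast, ds_neg_left, ds_neg_right] at R ⊢
    push_cast
    simp only [mul_neg, div_neg, neg_div]
    linarith
  · obtain ⟨m, hm⟩ : ∃ m : ℕ, a = m := ⟨a.natAbs, by omega⟩
    obtain ⟨n, hn'⟩ : ∃ n : ℕ, c = n := ⟨c.natAbs, by omega⟩
    rw [Int.sign_eq_one_of_pos ha', Int.sign_eq_one_of_pos hc']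
    subst hm
    subst hn'
    simp only [Int.natAbs_natCast] at R ⊢
    push_cast
    linarith

lemma dsD_unit (a c : ℤ) (hc : c = 1 ∨ c = -1) : dsD a c = 0 := by
  have : dedekindSum a 1 = 0 := by
    have := ds_eq_range a 1 one_pos
    simpa [saw_zero] using this
  rcases hc with rfl | rfl
  · simp [dsD, this]
  · simp [dsD, ds_neg_right, this]

/-- The Rademacher symbol in terms of entries. -/
noncomputable def radE (a b c d : ℤ) : ℝ :=
  (if c = 0 then (b : ℝ) / d else ((a + d : ℤ) : ℝ) / c - dsD a c) - 3 * ((c * (a + d)).sign : ℝ)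

lemma radE_S_zero (a b d : ℤ) (h : a * d = 1) : radE d 0 (-b) a = radE a b 0 d := by
  have had : a = 1 ∧ d = 1 ∨ a = -1 ∧ d = -1 := Int.mul_eq_one_iff_eq_one_or_neg_one.1 h
  by_cases hb : b = 0
  · subst hb; simp [radE]
  have hbR : (b : ℝ) ≠ 0 := by exact_mod_cast hb
  have hd : d ≠ 0 := by rintro rfl; simp at h
  have hco : IsCoprime d b := by
    rcases had with ⟨_, rfl⟩ | ⟨_, rfl⟩
    · exact isCoprime_one_left
    · exact isCoprime_one_left.neg_left
  have R := dsD_recip d b hd hb hco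
  rw [dsD_unit b d (by tauto)] at R
  have hneg : dsD d (-b) = - dsD d b := by simp [dsD, ds_neg_right]
  unfold radE
  rw [if_neg (by simpa using hb), if_pos rfl, hneg]
  simp only [neg_mul, Int.sign_neg, Int.sign_mul, Int.sign_zero] at R ⊢
  rcases had with ⟨rfl, rfl⟩ | ⟨rfl, rfl⟩
  · have : Int.sign (1 + 1) = 1 := rfl
    rw [this]
    simp at R ⊢
    field_simp at R ⊢
    linarith
  · have : Int.sign (-1 + -1) = -1 := rfl
    rw [this]
    simp at R ⊢
    field_simp at R ⊢
    linarith

lemma dsD_neg_left (a c : ℤ) : dsD (-a) c = - dsD a c := by simp [dsD, ds_neg_left]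
lemma dsD_neg_right (a c : ℤ) : dsD a (-c) = - dsD a c := by simp [dsD, ds_neg_right]

lemma radE_neg (a b c d : ℤ) : radE (-a) (-b) (-c) (-d) = radE a b c d := by
  unfold radE
  rw [dsD_neg_left, dsD_neg_right]
  have : -c * (-a + -d) = c * (a + d) := by ring
  rw [this]
  by_cases hc : c = 0
  · simp [hc, neg_div_neg_eq]
  · have e : (((-a + -d : ℤ) : ℝ)) / ((-c : ℤ) : ℝ) = ((a + d : ℤ) : ℝ) / c := by
      push_cast; rw [← neg_div_neg_eq]; congr 1 <;> ring
    rw [if_neg (by simpa using hc), if_neg hc, e, neg_neg]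

lemma sign_rel (a b c d : ℤ) (h : a * d - b * c = 1) (ha : a ≠ 0) (hb : b ≠ 0) (hc : c ≠ 0) :
    (b.sign + c.sign) * (a.sign - (a + d).sign) = 0 := by
  by_cases hbc : 0 < b * c
  · have hd : 0 < a * d := by linarith
    rcases mul_pos_iff.1 hd with ⟨h1, h2⟩ | ⟨h1, h2⟩
    · rw [Int.sign_eq_one_of_pos h1, Int.sign_eq_one_of_pos (add_pos h1 h2)]; simp
    · rw [Int.sign_eq_neg_one_of_neg h1, Int.sign_eq_neg_one_of_neg (add_neg h1 h2)]; simp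
  · have : b * c < 0 := lt_of_le_of_ne (not_lt.1 hbc) (mul_ne_zero hb hc)
    rcases mul_neg_iff.1 this with ⟨h1, h2⟩ | ⟨h1, h2⟩
    · rw [Int.sign_eq_one_of_pos h1, Int.sign_eq_neg_one_of_neg h2]; simp
    · rw [Int.sign_eq_one_of_pos h2, Int.sign_eq_neg_one_of_neg h1]; simp

lemma radE_S (a b c d : ℤ) (h : a * d - b * c = 1) : radE d (-c) (-b) a = radE a b c d := by
  by_cases hc : c = 0
  · subst hc; simpa using radE_S_zero a b d (by linarith)
  by_cases hb : b = 0
  · subst hb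
    have := radE_S_zero d (-c) a (by linarith)
    rw [neg_neg] at this
    simpa using this.symm
  have hbR : (b : ℝ) ≠ 0 := by exact_mod_cast hb
  have hcR : (c : ℝ) ≠ 0 := by exact_mod_cast hc
  have key : dsD a b + dsD a c = ((a + d : ℤ) : ℝ) / b + ((a + d : ℤ) : ℝ) / c
      - 3 * (b.sign + c.sign : ℤ) * ((a + d).sign : ℤ) := by
    by_cases ha : a = 0
    · subst ha
      have hz : ∀ c, dsD 0 c = 0 := fun c => by
        have := dsD_neg_left 0 c
        rw [neg_zero] at this; linarith
      have hbc : b * (-c) = 1 := by linarith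
      rw [hz, hz]
      rcases Int.mul_eq_one_iff_eq_one_or_neg_one.1 hbc with ⟨h1, h2⟩ | ⟨h1, h2⟩
      · obtain rfl : c = -1 := by omega
        subst h1; simp; ring
      · obtain rfl : c = 1 := by omega
        subst h1; simp; ring
    have haR : (a : ℝ) ≠ 0 := by exact_mod_cast ha
    have R1 := dsD_recip a b ha hb ⟨d, -c, by linarith⟩
    have R2 := dsD_recip a c ha hc ⟨d, -b, by linarith⟩
    have R3 : dsD b a = - dsD c a := by
      rw [← dsD_neg_left]
      unfold dsD
      rw [ds_inv (-c) b a ha ⟨-d, by linarith⟩]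
    have hS : ((b.sign : ℝ) + c.sign) * (a.sign - (a + d).sign) = 0 := by
      exact_mod_cast sign_rel a b c d h ha hb hc
    have hR : (a : ℝ) * d - b * c = 1 := by exact_mod_cast h
    have hf : (a : ℝ) / b + b / a + 1 / (a * b) + (a / c + c / a + 1 / (a * c)) =
        ((a + d : ℤ) : ℝ) / b + ((a + d : ℤ) : ℝ) / c := by
      push_cast
      field_simp
      linear_combination (-((b : ℝ) + c)) * hR
    rw [Int.sign_mul] at R1 R2
    push_cast at R1 R2 hf ⊢
    linear_combination R1 + R2 - R3 + hf - 3 * hS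
  have hdb : dsD d b = dsD a b := by
    unfold dsD; rw [ds_inv a d b hb ⟨c, by linarith⟩]
  unfold radE
  rw [if_neg (by simpa using hb), if_neg hc, dsD_neg_right, hdb, add_comm d a, Int.sign_mul,
    Int.sign_mul, Int.sign_neg]
  push_cast at key ⊢
  rw [div_neg]
  linear_combination key

lemma radE_T (a b c d : ℤ) (h : a * d - b * c = 1) :
    radE (a + c) (b + d - a - c) c (d - c) = radE a b c d := by
  by_cases hc : c = 0
  · subst hc
    have had : a = 1 ∧ d = 1 ∨ a = -1 ∧ d = -1 :=
      Int.mul_eq_one_iff_eq_one_or_neg_one.1 (by linarith)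
    rcases had with ⟨rfl, rfl⟩ | ⟨rfl, rfl⟩ <;> simp [radE]
  · unfold radE
    rw [if_neg hc, if_neg hc, show a + c + (d - c) = a + d by ring]
    unfold dsD
    rw [ds_periodic (a + c) a c hc (by simp)]

lemma rad_eq_radE (g : Matrix.SpecialLinearGroup (Fin 2) ℤ) :
    rademacherSymbol g = radE (g.1 0 0) (g.1 0 1) (g.1 1 0) (g.1 1 1) := rfl

lemma rad_S (g : Matrix.SpecialLinearGroup (Fin 2) ℤ) :
    rademacherSymbol (ModularGroup.S * g * ModularGroup.S⁻¹) = rademacherSymbol g := by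
  have h := g.2
  rw [Matrix.det_fin_two] at h
  rw [rad_eq_radE g, ← radE_S _ _ _ _ h, rad_eq_radE]
  congr 1 <;>
    simp [Matrix.SpecialLinearGroup.coe_mul, Matrix.SpecialLinearGroup.coe_inv, ModularGroup.coe_S, Matrix.adjugate_fin_two, Matrix.mul_apply, Matrix.vecMul, dotProduct, Fin.sum_univ_two]

lemma rad_T (g : Matrix.SpecialLinearGroup (Fin 2) ℤ) :
    rademacherSymbol (ModularGroup.T * g * ModularGroup.T⁻¹) = rademacherSymbol g := by
  have h := g.2
  rw [Matrix.det_fin_two] at h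
  rw [rad_eq_radE g, ← radE_T _ _ _ _ h, rad_eq_radE]
  congr 1 <;>
    simp [Matrix.SpecialLinearGroup.coe_mul, Matrix.SpecialLinearGroup.coe_inv, ModularGroup.coe_T, Matrix.adjugate_fin_two, Matrix.mul_apply, Matrix.vecMul, dotProduct, Fin.sum_univ_two] <;> try ring

/-- **The Rademacher symbol is a class function on `SL₂(ℤ)`:**
`Ψ(δ γ δ⁻¹) = Ψ(γ)` for all `γ, δ ∈ SL₂(ℤ)`. -/
theorem rademacherSymbol_conj_invariant
    (γ δ : Matrix.SpecialLinearGroup (Fin 2) ℤ) :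
    rademacherSymbol (δ * γ * δ⁻¹) = rademacherSymbol γ := by
  have hmem : δ ∈ Subgroup.closure {ModularGroup.S, ModularGroup.T} := by
    rw [_root_.SpecialLinearGroup.SL2Z_generators]; trivial
  induction hmem using Subgroup.closure_induction generalizing γ with
  | mem x hx =>
    rcases hx with rfl | rfl
    · exact rad_S γ
    · exact rad_T γ
  | one => simp
  | mul x y _ _ hx hy =>
    rw [← hy γ, ← hx (y * γ * y⁻¹)]
    congr 1; group
  | inv x _ hx =>
    rw [← hx (x⁻¹ * γ * x⁻¹⁻¹)]
    congr 1; group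
end

section
/- Let p be a prime and let h be a modular form of weight 2 for the congruence subgroup Γ₀(p), with q-expansion h = Σ_{n ≥ 0} a_n q^n at the cusp ∞. If a_n = 0 for every integer n ≥ 1 with p ∤ n, then h = 0. -/
open scoped MatrixGroups Real

open Matrix Matrix.SpecialLinearGroup in
/-- The entries of the real matrix attached to an integral matrix. -/
theorem aux_coe_GL (A : SL(2, ℤ)) (a b c d : ℤ)
    (hA : (A : Matrix (Fin 2) (Fin 2) ℤ) = !![a, b; c, d]) :
    ((A : GL (Fin 2) ℝ) : Matrix (Fin 2) (Fin 2) ℝ) = !![(a : ℝ), b; c, d] := by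
  ext i j
  change (((A : Matrix (Fin 2) (Fin 2) ℤ) i j : ℤ) : ℝ) = _
  rw [hA]
  fin_cases i <;> fin_cases j <;> simp

open UpperHalfPlane ModularForm Matrix Matrix.SpecialLinearGroup in
open scoped Manifold in
/-- A function bounded at infinity, holomorphic and invariant under `S`, `T` in weight 2 is zero. -/
theorem aux_levelOne_zero (g : ℍ → ℂ) (hol : MDiff g) (hb : IsBoundedAtImInfty g)
    (hS : g ∣[(2 : ℤ)] ModularGroup.S = g) (hT : g ∣[(2 : ℤ)] ModularGroup.T = g) : g = 0 := by
  have hall := SlashInvariantForm.slash_action_generators_SL2Z hS hT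
  let G : ModularForm 𝒮ℒ 2 :=
    { toFun := g
      slash_action_eq' := by
        rintro _ ⟨γ, rfl⟩
        exact hall γ
      holo' := hol
      bdd_at_cusps' := by
        intro c hc
        rw [OnePoint.isBoundedAt_iff_forall_SL2Z hc]
        intro γ _
        rw [hall γ]
        exact hb }
  have hG : G = 0 := rank_zero_iff_forall_zero.mp ModularForm.levelOne_weight_two_rank_zero G
  have : (G : ℍ → ℂ) = 0 := by rw [hG]; rfl
  exact this

open UpperHalfPlane ModularForm Matrix Matrix.SpecialLinearGroup in
/-- **A weight 2 form on `Γ₀(p)` vanishing at all indices prime to `p` is zero.**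
Let `p` be a prime and `h ∈ M₂(Γ₀(p))` with `q`-expansion `h(z) = ∑_{n ≥ 0} aₙ qⁿ`
(`q = e^{2πiz}`) at the cusp `∞`.  If `aₙ = 0` for every `n ≥ 1` with `p ∤ n`, then `h = 0`. -/
theorem modularForm_eq_zero_of_coeffs_vanish_off_p
    (p : ℕ) (hp : p.Prime)
    (h : ModularForm (CongruenceSubgroup.Gamma0 p) 2)
    (a : ℕ → ℂ)
    (ha : ∀ z : UpperHalfPlane,
      h z = ∑' n : ℕ, a n * Complex.exp (2 * π * Complex.I * n * (z : ℂ)))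
    (hvan : ∀ n : ℕ, 1 ≤ n → ¬ (p ∣ n) → a n = 0) :
    h = 0 := by
  have hp0 : (p : ℝ) ≠ 0 := by exact_mod_cast hp.ne_zero
  have hpC : (p : ℂ) ≠ 0 := by exact_mod_cast hp.ne_zero
  have : NeZero p := ⟨hp.ne_zero⟩
  -- periodicity
  have hper : ∀ z : ℍ, h (((1 : ℝ) / p) +ᵥ z) = h z := by
    intro z
    rw [ha, ha]
    refine tsum_congr fun n => ?_
    by_cases hn : p ∣ n
    · obtain ⟨m, rfl⟩ := hn
      congr 1
      rw [Complex.exp_eq_exp_iff_exists_int]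
      refine ⟨m, ?_⟩
      rw [coe_vadd]
      push_cast
      field_simp
      ring
    · have : 1 ≤ n := Nat.one_le_iff_ne_zero.mpr (by rintro rfl; simp at hn)
      rw [hvan n this hn]
      simp
  let U : GL (Fin 2) ℝ := GeneralLinearGroup.upperRightHom (1 / p : ℝ)
  have hU : (h : ℍ → ℂ) ∣[(2 : ℤ)] U = h := by
    ext τ
    rw [← hper τ]
    have : U • τ = (1 / p : ℝ) +ᵥ τ := by
      ext
      simp [U, σ, num, denom, coe_vadd, UpperHalfPlane.coe_smul, add_comm]
    simp_rw [slash_def, this]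
    simp [U, σ, denom, GeneralLinearGroup.val_det_apply]
  let D : GL (Fin 2) ℝ := GeneralLinearGroup.mkOfDetNeZero !![1, 0; 0, (p : ℝ)] (by simpa using hp0)
  obtain ⟨L, hLc⟩ : ∃ L : SL(2, ℤ), (L : Matrix (Fin 2) (Fin 2) ℤ) = !![1, 0; (p : ℤ), 1] :=
    ⟨⟨_, by simp⟩, rfl⟩
  obtain ⟨L1, hL1c⟩ : ∃ L : SL(2, ℤ), (L : Matrix (Fin 2) (Fin 2) ℤ) = !![1, 0; 1, 1] :=
    ⟨⟨_, by simp⟩, rfl⟩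
  have hL : (h : ℍ → ℂ) ∣[(2 : ℤ)] (L : GL (Fin 2) ℝ) = h := by
    apply SlashInvariantFormClass.slash_action_eq h
    refine ⟨L, ?_, rfl⟩
    change L ∈ CongruenceSubgroup.Gamma0 p
    simp [CongruenceSubgroup.Gamma0_mem, hLc]
  let g : ℍ → ℂ := (h : ℍ → ℂ) ∣[(2 : ℤ)] D
  have e1 : D * (ModularGroup.T : GL (Fin 2) ℝ) = U * D := by
    apply Units.ext
    rw [Units.val_mul, Units.val_mul, aux_coe_GL _ _ _ _ _ ModularGroup.coe_T]
    ext i j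
    fin_cases i <;> fin_cases j <;>
      simp [D, U, hp0, GeneralLinearGroup.mkOfDetNeZero]
  have e2 : D * (L1 : GL (Fin 2) ℝ) = (L : GL (Fin 2) ℝ) * D := by
    apply Units.ext
    rw [Units.val_mul, Units.val_mul, aux_coe_GL _ _ _ _ _ hL1c, aux_coe_GL _ _ _ _ _ hLc]
    ext i j
    fin_cases i <;> fin_cases j <;>
      simp [D, GeneralLinearGroup.mkOfDetNeZero]
  have hT : g ∣[(2 : ℤ)] ModularGroup.T = g := by
    change ((h : ℍ → ℂ) ∣[(2 : ℤ)] D) ∣[(2 : ℤ)] (ModularGroup.T : GL (Fin 2) ℝ) = _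
    rw [← SlashAction.slash_mul, e1, SlashAction.slash_mul, hU]
  have hL1 : g ∣[(2 : ℤ)] L1 = g := by
    change ((h : ℍ → ℂ) ∣[(2 : ℤ)] D) ∣[(2 : ℤ)] (L1 : GL (Fin 2) ℝ) = _
    rw [← SlashAction.slash_mul, e2, SlashAction.slash_mul, hL]
  have hTi : g ∣[(2 : ℤ)] (ModularGroup.T⁻¹) = g := by
    conv_lhs => rw [← hT]
    rw [← SlashAction.slash_mul, mul_inv_cancel, SlashAction.slash_one]
  have eS : ModularGroup.S = ModularGroup.T⁻¹ * L1 * ModularGroup.T⁻¹ := by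
    have : L1 = ModularGroup.T * ModularGroup.S * ModularGroup.T := by
      have hm : (L1 : Matrix (Fin 2) (Fin 2) ℤ) =
          (ModularGroup.T : Matrix (Fin 2) (Fin 2) ℤ) * (ModularGroup.S : Matrix (Fin 2) (Fin 2) ℤ)
            * (ModularGroup.T : Matrix (Fin 2) (Fin 2) ℤ) := by
        rw [hL1c, ModularGroup.coe_T, ModularGroup.coe_S]
        simp
      exact Subtype.ext hm
    rw [this]
    group
  have hS : g ∣[(2 : ℤ)] ModularGroup.S = g := by
    rw [eS, SlashAction.slash_mul, SlashAction.slash_mul, hTi, hL1, hTi]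
  have hb : IsBoundedAtImInfty g :=
    (ModularFormClass.bdd_at_infty h).slash _ (by simp [D, GeneralLinearGroup.mkOfDetNeZero])
  have hg0 : g = 0 :=
    aux_levelOne_zero g ((ModularFormClass.holo h).slash 2 D) hb hS hT
  have hh : (h : ℍ → ℂ) = g ∣[(2 : ℤ)] D⁻¹ := by
    rw [← SlashAction.slash_mul, mul_inv_cancel, SlashAction.slash_one]
  rw [hg0, SlashAction.zero_slash] at hh
  exact DFunLike.coe_injective hh
end
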